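/- There is a universal constant C > 0 such that the meta MWU algorithm over kernelized MWU base learners achieves, for every d ≥ 2, T ≥ 1, every sequence of losses ℓ_1,…,ℓ_T ∈ [0,1]^d, every φ ∈ S and every q ∈ Q_φ: Reg(φ) = Σ_{t=1}^T ⟨p_t − φ^T p_t, ℓ_t⟩ ≤ C·(√(T·KL(q,π)) + √(T·(1 + log(1 + log d)))). In particular (taking q the point mass at φ ∈ Φ_b and using log(1/π(φ)) ≤ 2 + 2 c_φ log d), Reg(φ) ≤ C'·(√((1 + c_φ log d)·T) + √(T·(1 + log(1 + log d)))) for all φ ∈ S, for a universal constant C'. -/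

import Mathlib

open Finset

/-- The binary row-stochastic matrix associated with a map `f : [d] → [d]`. -/
def toMat (d : ℕ) (f : Fin d → Fin d) : Matrix (Fin d) (Fin d) ℝ :=
  fun i j => if f i = j then 1 else 0

/-- The set `Φ_b` of binary row-stochastic `d × d` matrices. -/
noncomputable def PhiB (d : ℕ) : Finset (Matrix (Fin d) (Fin d) ℝ) := by
  classical exact Finset.image (toMat d) Finset.univ

/-- A matrix is row-stochastic if every row lies in the simplex. -/
def RowStochastic {d : ℕ} (φ : Matrix (Fin d) (Fin d) ℝ) : Prop :=
  ∀ i, (∀ j, 0 ≤ φ i j) ∧ ∑ j, φ i j = 1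

/-- A vector lies in the probability simplex `Δ(d)`. -/
def InSimplex (d : ℕ) (p : Fin d → ℝ) : Prop :=
  (∀ i, 0 ≤ p i) ∧ ∑ i, p i = 1

/-- The `ψ`-induced weight of `φ`: `π_ψ(φ) = ∏ i ⟨ψ_{i:}, φ_{i:}⟩`. -/
noncomputable def piInd {d : ℕ} (ψ φ : Matrix (Fin d) (Fin d) ℝ) : ℝ :=
  ∏ i, ∑ j, ψ i j * φ i j

/-- `ψ^k = ((d-2)/(d-1))·1 e_k^T + (1/(d(d-1)))·1 1^T`. -/
noncomputable def psiK (d : ℕ) (k : Fin d) : Matrix (Fin d) (Fin d) ℝ :=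
  fun _ j => ((d : ℝ) - 2) / ((d : ℝ) - 1) * (if j = k then 1 else 0) + 1 / ((d : ℝ) * ((d : ℝ) - 1))

/-- `ψ^{d+1} = ((d-2)/(d-1))·I + (1/(d(d-1)))·1 1^T`. -/
noncomputable def psiSelf (d : ℕ) : Matrix (Fin d) (Fin d) ℝ :=
  fun i j => ((d : ℝ) - 2) / ((d : ℝ) - 1) * (if i = j then 1 else 0) + 1 / ((d : ℝ) * ((d : ℝ) - 1))

/-- The special prior `π = (1/(2d)) Σ_k π_{ψ^k} + (1/2) π_{ψ^{d+1}}`. -/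
noncomputable def priorPi (d : ℕ) (φ : Matrix (Fin d) (Fin d) ℝ) : ℝ :=
  1 / (2 * d) * ∑ k : Fin d, piInd (psiK d k) φ + 1 / 2 * piInd (psiSelf d) φ

/-- `d^self_φ`: the number of indices `i` whose row equals `e_i^T`. -/
noncomputable def dSelf {d : ℕ} (φ : Matrix (Fin d) (Fin d) ℝ) : ℕ :=
  Nat.card {i : Fin d // φ i = fun j => if j = i then (1 : ℝ) else 0}

/-- `d^unif_φ`: the maximum multiplicity in the multiset of rows of `φ`. -/
noncomputable def dUnif {d : ℕ} (φ : Matrix (Fin d) (Fin d) ℝ) : ℕ :=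
  Finset.univ.sup fun i : Fin d => Nat.card {j : Fin d // φ j = φ i}

/-- Complexity measure for binary row-stochastic matrices. -/
noncomputable def cB {d : ℕ} (φ : Matrix (Fin d) (Fin d) ℝ) : ℕ :=
  min (d - dSelf φ) (d - dUnif φ + 1)

/-- `Q_φ`: distributions over `Φ_b` (indexed by maps `f : [d] → [d]`) averaging to `φ`. -/
def QSet (d : ℕ) (φ : Matrix (Fin d) (Fin d) ℝ) : Set ((Fin d → Fin d) → ℝ) :=
  {q | (∀ f, 0 ≤ q f) ∧ (∑ f, q f = 1) ∧ ∀ i j, ∑ f, q f * toMat d f i j = φ i j}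

/-- Extended complexity measure `c_φ = inf_{q ∈ Q_φ} E_{φ'∼q}[c_{φ'}]`. -/
noncomputable def cGen (d : ℕ) (φ : Matrix (Fin d) (Fin d) ℝ) : ℝ :=
  sInf ((fun q => ∑ f : Fin d → Fin d, q f * (cB (toMat d f) : ℝ)) '' QSet d φ)

/-- Matrix inner product `⟨φ, p ℓ^T⟩`. -/
noncomputable def lossInner {d : ℕ} (φ : Matrix (Fin d) (Fin d) ℝ) (p ℓ : Fin d → ℝ) : ℝ :=
  ∑ i, ∑ j, φ i j * (p i * ℓ j)

/-- The mean matrix `E_{f∼q}[φ_f]` of a weight vector over binary matrices. -/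
noncomputable def mixMat (d : ℕ) (q : (Fin d → Fin d) → ℝ) : Matrix (Fin d) (Fin d) ℝ :=
  fun i j => ∑ f, q f * toMat d f i j

/-- KL divergence of `q` (a distribution over `Φ_b`, indexed by maps) from the prior `π`. -/
noncomputable def klPrior (d : ℕ) (q : (Fin d → Fin d) → ℝ) : ℝ :=
  ∑ f, q f * Real.log (q f / priorPi d (toMat d f))

/-- The kernel `K(B,A) = Σ_{φ∈Φ_b} π(φ) Π_{i,j : φ_{ij}=1} B_{ij} A_{ij}`. -/
noncomputable def kernelK (d : ℕ) (B A : Matrix (Fin d) (Fin d) ℝ) : ℝ := by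
  classical exact
    ∑ φ ∈ PhiB d, priorPi d φ * ∏ i, ∏ j, if φ i j = 1 then B i j * A i j else 1

/-! The regret against `φ = E_{f ∼ q}[toMat d f]` splits at any base learner `h`: since `p t` is
stationary for the weighted average matrix, it is the regret of the meta learner against `h`
plus the regret of `h` against `q`. Multiplicative weights with rate `η` and prior `v` has regret
at most `KL(u, v) / η + η T / 2` against `u`, because each update decreases `KL(u, ·)` by at least
`η` times the regret of that round, up to an error `η² / 2`. The meta learner's `KL` is `log M`,
and as the rates `√(2^h / T)` form a geometric grid, some `h` is tuned to `KL(q, π)` up to a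
factor `2`.

For the bound in terms of `c_φ`, all components of the prior are obtained by smoothing a map `g`
(constant, or the identity), and such a component gives `f` a weight of at least
`e⁻² d ^ (-2 · hammingDist f g)`. -/

section RelativeEntropy

variable {ι : Type*} {s : Finset ι} {u v : ι → ℝ}

/-- The relative entropy (Kullback–Leibler divergence) `KL(u, v)` of two weight functions on a
finite set, real-valued and unnormalised. It is only meaningful for `v > 0` on `s`, because of
`x / 0 = 0`. -/
noncomputable def relEntropy (s : Finset ι) (u v : ι → ℝ) : ℝ :=
  ∑ i ∈ s, u i * Real.log (u i / v i)

theorem relEntropy_nonneg (hu : ∀ i ∈ s, 0 ≤ u i) (hv : ∀ i ∈ s, 0 < v i)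
    (huv : ∑ i ∈ s, v i ≤ ∑ i ∈ s, u i) : 0 ≤ relEntropy s u v := by
  have hkl : 0 ≤ ∑ i ∈ s, v i * InformationTheory.klFun (u i / v i) :=
    sum_nonneg fun i hi =>
      mul_nonneg (hv i hi).le (InformationTheory.klFun_nonneg (div_nonneg (hu i hi) (hv i hi).le))
  have hterm : ∀ i ∈ s, v i * InformationTheory.klFun (u i / v i) =
      u i * Real.log (u i / v i) + (v i - u i) := fun i hi => by
    have := (hv i hi).ne'
    rw [InformationTheory.klFun_apply]
    field_simp
    ring
  rw [sum_congr rfl hterm, sum_add_distrib, sum_sub_distrib] at hkl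
  rw [relEntropy]
  linarith

theorem relEntropy_le_sum_mul_neg_log (hu : ∀ i ∈ s, 0 ≤ u i) (hu1 : ∀ i ∈ s, u i ≤ 1)
    (hv : ∀ i ∈ s, 0 < v i) : relEntropy s u v ≤ ∑ i ∈ s, u i * -Real.log (v i) := by
  refine sum_le_sum fun i hi => ?_
  rcases (hu i hi).eq_or_lt with h0 | hpos
  · simp [← h0]
  · refine mul_le_mul_of_nonneg_left ?_ (hu i hi)
    rw [Real.log_div hpos.ne' (hv i hi).ne']
    linarith [Real.log_nonpos (hu i hi) (hu1 i hi)]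

theorem relEntropy_single [DecidableEq ι] {i : ι} (hi : i ∈ s) :
    relEntropy s (Pi.single i 1) v = -Real.log (v i) := by
  simp [relEntropy, Pi.single_apply, hi]

end RelativeEntropy

section MultiplicativeWeights

theorem exp_neg_le_one_sub_add_sq {x : ℝ} (hx : 0 ≤ x) : Real.exp (-x) ≤ 1 - x + x ^ 2 / 2 := by
  have hpos : 0 ≤ 1 - x + x ^ 2 / 2 := by nlinarith [sq_nonneg (x - 1)]
  have hprod : 1 ≤ (1 - x + x ^ 2 / 2) * (1 + x + x ^ 2 / 2) := by nlinarith [sq_nonneg (x ^ 2)]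
  rw [Real.exp_neg, inv_le_iff_one_le_mul₀ (Real.exp_pos x)]
  exact hprod.trans (mul_le_mul_of_nonneg_left (Real.quadratic_le_exp_of_nonneg hx) hpos)

/-- `v` is the weight trajectory of multiplicative weights over the experts in `s`, run for the
rounds `1, …, T` with rate `η` on the losses `L`, started from a positive distribution `v 1`. -/
structure IsMWU {ι : Type*} (s : Finset ι) (T : ℕ) (η : ℝ) (L v : ℕ → ι → ℝ) : Prop where
  init_pos : ∀ i ∈ s, 0 < v 1 i
  init_sum : ∑ i ∈ s, v 1 i = 1
  update : ∀ t ∈ Icc 1 T, ∀ i ∈ s, v (t + 1) i =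
    v t i * Real.exp (-η * L t i) / ∑ j ∈ s, v t j * Real.exp (-η * L t j)

namespace IsMWU

variable {ι κ : Type*} {s : Finset ι} {T t : ℕ} {η : ℝ} {L v : ℕ → ι → ℝ} {u : ι → ℝ}

theorem nonempty (hv : IsMWU s T η L v) : s.Nonempty :=
  nonempty_of_sum_ne_zero (hv.init_sum.trans_ne one_ne_zero)

theorem sum_mul_exp_pos (hv : IsMWU s T η L v) (hpos : ∀ i ∈ s, 0 < v t i) :
    0 < ∑ i ∈ s, v t i * Real.exp (-η * L t i) :=
  sum_pos (fun i hi => mul_pos (hpos i hi) (Real.exp_pos _)) hv.nonempty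

theorem pos (hv : IsMWU s T η L v) (ht : t ∈ Icc 1 (T + 1)) : ∀ i ∈ s, 0 < v t i := by
  obtain ⟨h1t, htT⟩ := mem_Icc.1 ht
  induction t, h1t using Nat.le_induction with
  | base => exact hv.init_pos
  | succ t h1t ih =>
    have hpos := ih (mem_Icc.2 ⟨h1t, by omega⟩) (by omega)
    intro i hi
    rw [hv.update t (mem_Icc.2 ⟨h1t, by omega⟩) i hi]
    exact div_pos (mul_pos (hpos i hi) (Real.exp_pos _)) (hv.sum_mul_exp_pos hpos)

theorem pos_of_mem (hv : IsMWU s T η L v) (ht : t ∈ Icc 1 T) : ∀ i ∈ s, 0 < v t i :=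
  hv.pos (Icc_subset_Icc_right T.le_succ ht)

theorem sum_succ_eq_one (hv : IsMWU s T η L v) (ht : t ∈ Icc 1 T) : ∑ i ∈ s, v (t + 1) i = 1 := by
  rw [sum_congr rfl (hv.update t ht), ← sum_div]
  exact div_self (hv.sum_mul_exp_pos (hv.pos_of_mem ht)).ne'

theorem sum_eq_one (hv : IsMWU s T η L v) (ht : t ∈ Icc 1 (T + 1)) : ∑ i ∈ s, v t i = 1 := by
  obtain ⟨h1t, htT⟩ := mem_Icc.1 ht
  rcases h1t.eq_or_lt with rfl | h1t
  · exact hv.init_sum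
  · obtain ⟨n, rfl⟩ := Nat.exists_eq_add_of_lt h1t
    exact hv.sum_succ_eq_one (mem_Icc.2 ⟨by omega, by omega⟩)

theorem sum_eq_one_of_mem (hv : IsMWU s T η L v) (ht : t ∈ Icc 1 T) : ∑ i ∈ s, v t i = 1 :=
  hv.sum_eq_one (Icc_subset_Icc_right T.le_succ ht)

theorem log_sum_mul_exp_le (hv : IsMWU s T η L v) (hη : 0 ≤ η) (ht : t ∈ Icc 1 T)
    (hL : ∀ i ∈ s, L t i ∈ Set.Icc 0 1) :
    Real.log (∑ i ∈ s, v t i * Real.exp (-η * L t i)) ≤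
      -(η * ∑ i ∈ s, v t i * L t i) + η ^ 2 / 2 := by
  have hexp : ∀ i ∈ s, Real.exp (-η * L t i) ≤ 1 - η * L t i + η ^ 2 / 2 := fun i hi => by
    obtain ⟨h0, h1⟩ := hL i hi
    have hle := exp_neg_le_one_sub_add_sq (mul_nonneg hη h0)
    have hsq : (η * L t i) ^ 2 ≤ η ^ 2 :=
      pow_le_pow_left₀ (mul_nonneg hη h0) (mul_le_of_le_one_right hη h1) 2
    rw [neg_mul]
    linarith
  calc Real.log (∑ i ∈ s, v t i * Real.exp (-η * L t i))
      ≤ ∑ i ∈ s, v t i * Real.exp (-η * L t i) - 1 :=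
        Real.log_le_sub_one_of_pos (hv.sum_mul_exp_pos (hv.pos_of_mem ht))
    _ ≤ ∑ i ∈ s, v t i * (1 - η * L t i + η ^ 2 / 2) - 1 := by
        gcongr with i hi
        · exact (hv.pos_of_mem ht i hi).le
        · exact hexp i hi
    _ = ∑ i ∈ s, ((1 + η ^ 2 / 2) * v t i - η * (v t i * L t i)) - 1 := by
        congr! 2 with i
        ring
    _ = -(η * ∑ i ∈ s, v t i * L t i) + η ^ 2 / 2 := by
        rw [sum_sub_distrib, ← mul_sum, ← mul_sum, hv.sum_eq_one_of_mem ht]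
        ring

theorem relEntropy_succ (hv : IsMWU s T η L v) (ht : t ∈ Icc 1 T) (hu1 : ∑ i ∈ s, u i = 1) :
    relEntropy s u (v (t + 1)) = relEntropy s u (v t) + η * ∑ i ∈ s, u i * L t i +
      Real.log (∑ i ∈ s, v t i * Real.exp (-η * L t i)) := by
  have hZ := hv.sum_mul_exp_pos (hv.pos_of_mem ht)
  have hupdate := hv.update t ht
  set Z := ∑ i ∈ s, v t i * Real.exp (-η * L t i)
  have hterm : ∀ i ∈ s, u i * Real.log (u i / v (t + 1) i) =
      u i * Real.log (u i / v t i) + η * (u i * L t i) + u i * Real.log Z := fun i hi => by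
    rcases eq_or_ne (u i) 0 with h0 | h0
    · simp [h0]
    · have hvi := (hv.pos_of_mem ht i hi).ne'
      rw [hupdate i hi, Real.log_div h0 (by positivity), Real.log_div h0 hvi,
        Real.log_div (by positivity) hZ.ne', Real.log_mul hvi (Real.exp_ne_zero _), Real.log_exp]
      ring
  rw [relEntropy, sum_congr rfl hterm, sum_add_distrib, sum_add_distrib, ← mul_sum, ← sum_mul,
    hu1, one_mul, relEntropy]

theorem regret_le (hv : IsMWU s T η L v) (hη : 0 < η)
    (hL : ∀ t ∈ Icc 1 T, ∀ i ∈ s, L t i ∈ Set.Icc 0 1)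
    (hu : ∀ i ∈ s, 0 ≤ u i) (hu1 : ∑ i ∈ s, u i = 1) :
    ∑ t ∈ Icc 1 T, (∑ i ∈ s, v t i * L t i - ∑ i ∈ s, u i * L t i) ≤
      relEntropy s u (v 1) / η + η * T / 2 := by
  have hround : ∀ t ∈ Icc 1 T, η * (∑ i ∈ s, v t i * L t i - ∑ i ∈ s, u i * L t i) ≤
      -(relEntropy s u (v (t + 1)) - relEntropy s u (v t)) + η ^ 2 / 2 := fun t ht => by
    linarith [hv.relEntropy_succ ht hu1, hv.log_sum_mul_exp_le hη.le ht (hL t ht)]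
  have htelescope : ∑ t ∈ Icc 1 T, (relEntropy s u (v (t + 1)) - relEntropy s u (v t)) =
      relEntropy s u (v (T + 1)) - relEntropy s u (v 1) := by
    rw [← Ico_add_one_right_eq_Icc]
    exact sum_Ico_sub (fun t => relEntropy s u (v t)) (by omega)
  have hlast : T + 1 ∈ Icc 1 (T + 1) := right_mem_Icc.2 (by omega)
  have hnonneg : 0 ≤ relEntropy s u (v (T + 1)) :=
    relEntropy_nonneg hu (hv.pos hlast) (by rw [hv.sum_eq_one hlast, hu1])
  have hsum := sum_le_sum hround
  rw [← mul_sum, sum_add_distrib, sum_neg_distrib, htelescope, sum_const, Nat.card_Icc,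
    Nat.add_sub_cancel, nsmul_eq_mul] at hsum
  calc ∑ t ∈ Icc 1 T, (∑ i ∈ s, v t i * L t i - ∑ i ∈ s, u i * L t i)
      ≤ (relEntropy s u (v 1) + η ^ 2 * T / 2) / η := by
        rw [le_div_iff₀ hη]
        linarith
    _ = relEntropy s u (v 1) / η + η * T / 2 := by field_simp

theorem regret_le_neg_log (hv : IsMWU s T η L v) (hη : 0 < η)
    (hL : ∀ t ∈ Icc 1 T, ∀ i ∈ s, L t i ∈ Set.Icc 0 1) {i : ι} (hi : i ∈ s) :
    ∑ t ∈ Icc 1 T, (∑ j ∈ s, v t j * L t j - L t i) ≤ -Real.log (v 1 i) / η + η * T / 2 := by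
  classical
  have hregret := hv.regret_le (u := Pi.single i 1) hη hL
    (fun j _ => by rw [Pi.single_apply]; split_ifs <;> norm_num) (by simp [Pi.single_apply, hi])
  rw [relEntropy_single hi] at hregret
  simpa [Pi.single_apply, hi] using hregret

theorem meta_regret_le {H : Finset κ} {q : κ → ℕ → ι → ℝ} {w : ℕ → κ → ℝ} {ηB : κ → ℝ}
    (hw : IsMWU H T η (fun t h => ∑ i ∈ s, q h t i * L t i) w)
    (hq : ∀ h ∈ H, IsMWU s T (ηB h) L (q h)) (hη : 0 < η) {h : κ} (hh : h ∈ H) (hηB : 0 < ηB h)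
    (hL : ∀ t ∈ Icc 1 T, ∀ i ∈ s, L t i ∈ Set.Icc 0 1)
    (hu : ∀ i ∈ s, 0 ≤ u i) (hu1 : ∑ i ∈ s, u i = 1) :
    ∑ t ∈ Icc 1 T, (∑ k ∈ H, w t k * ∑ i ∈ s, q k t i * L t i - ∑ i ∈ s, u i * L t i) ≤
      (-Real.log (w 1 h) / η + η * T / 2) + (relEntropy s u (q h 1) / ηB h + ηB h * T / 2) := by
  have hmeta := hw.regret_le_neg_log hη (fun t ht k hk => (convex_Icc 0 1).sum_mem
    (fun i hi => ((hq k hk).pos_of_mem ht i hi).le) ((hq k hk).sum_eq_one_of_mem ht) (hL t ht)) hh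
  have hbase := (hq h hh).regret_le hηB hL hu hu1
  refine le_of_eq_of_le ?_ (add_le_add hmeta hbase)
  rw [← sum_add_distrib]
  simp only [sub_add_sub_cancel]

end IsMWU

end MultiplicativeWeights

section RateTuning

theorem sqrt_add_le_sqrt_add_sqrt {x y : ℝ} (hx : 0 ≤ x) (hy : 0 ≤ y) :
    √(x + y) ≤ √x + √y := by
  simpa only [Real.sqrt_eq_rpow] using
    Real.rpow_add_le_add_rpow hx hy one_half_pos.le one_half_lt_one.le

theorem div_sqrt_add_sqrt_mul_le {a K c T : ℝ} (ha : 0 < a) (hc : 0 ≤ c) (hT : 0 < T)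
    (haK : a ≤ K) (hKa : K ≤ c ^ 2 * a) :
    K / √(a / T) + √(a / T) * T / 2 ≤ (c + 1 / 2) * √(T * K) := by
  have hK : 0 ≤ K := ha.le.trans haK
  have hquot : K / √(a / T) ≤ c * √(T * K) := by
    rw [div_le_iff₀ (by positivity), mul_assoc, ← Real.sqrt_mul (by positivity),
      show T * K * (a / T) = K * a by field_simp]
    calc K = √(K * K) := (Real.sqrt_mul_self hK).symm
      _ ≤ √(c ^ 2 * (K * a)) := Real.sqrt_le_sqrt (by nlinarith)
      _ = c * √(K * a) := by rw [Real.sqrt_mul (sq_nonneg c), Real.sqrt_sq hc]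
  have hprod : √(a / T) * T ≤ √(T * K) := by
    calc √(a / T) * T = √(a / T * T ^ 2) := by
          rw [Real.sqrt_mul (by positivity), Real.sqrt_sq hT.le]
      _ = √(T * a) := by congr 1; field_simp
      _ ≤ √(T * K) := by gcongr
  linarith

theorem exists_mem_Icc_pow_le_and_le_mul_pow {x y c : ℝ} {M : ℕ} (hy : 1 < y) (hyx : y ≤ x)
    (hyc : y ≤ c) (hM : 1 ≤ M) (hxM : x ≤ c * y ^ M) :
    ∃ h ∈ Icc 1 M, y ^ h ≤ x ∧ x ≤ c * y ^ h := by
  obtain ⟨n, hnx, hxn⟩ := exists_nat_pow_near (hy.le.trans hyx) hy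
  rcases le_or_gt M n with hMn | hnM
  · exact ⟨M, right_mem_Icc.2 hM, (pow_le_pow_right₀ hy.le hMn).trans hnx, hxM⟩
  · have hn : n ≠ 0 := by
      rintro rfl
      exact hxn.not_ge (by simpa using hyx)
    refine ⟨n, mem_Icc.2 ⟨by omega, hnM.le⟩, hnx, hxn.le.trans ?_⟩
    rw [pow_succ']
    gcongr

theorem exists_mem_Icc_div_sqrt_pow_add_le {K T : ℝ} {M : ℕ} (hK : 0 ≤ K) (hT : 0 < T)
    (hM : 1 ≤ M) (hKM : K + 2 ≤ 4 * 2 ^ M) :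
    ∃ h ∈ Icc 1 M, K / √(2 ^ h / T) + √(2 ^ h / T) * T / 2 ≤ 5 / 2 * (√(T * K) + √(T * 2)) := by
  obtain ⟨h, hh, hle, hge⟩ := exists_mem_Icc_pow_le_and_le_mul_pow one_lt_two
    (le_add_of_nonneg_left hK) (by norm_num) hM hKM
  refine ⟨h, hh, ?_⟩
  calc K / √(2 ^ h / T) + √(2 ^ h / T) * T / 2
      ≤ (K + 2) / √(2 ^ h / T) + √(2 ^ h / T) * T / 2 := by gcongr; linarith
    _ ≤ (2 + 1 / 2) * √(T * (K + 2)) :=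
        div_sqrt_add_sqrt_mul_le (by positivity) zero_le_two hT hle (by linarith)
    _ ≤ 5 / 2 * (√(T * K) + √(T * 2)) := by
        rw [mul_add T]
        linarith [sqrt_add_le_sqrt_add_sqrt (x := T * K) (y := T * 2) (by positivity)
          (by positivity)]

theorem log_two_mul_clog_le {d : ℕ} (hd : 2 ≤ d) :
    Real.log (2 * Nat.clog 2 d) ≤ 2 * (1 + Real.log (1 + Real.log d)) := by
  have hlog : 0 ≤ Real.log d := Real.log_natCast_nonneg d
  have hloglog : 0 ≤ Real.log (1 + Real.log d) := Real.log_nonneg (by linarith)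
  have hclog_pos : (0 : ℝ) < Nat.clog 2 d := Nat.cast_pos.2 (Nat.clog_pos one_lt_two hd)
  have hclog : (Nat.clog 2 d : ℝ) ≤ 2 * (1 + Real.log d) := by
    have hceil : (Nat.clog 2 d : ℝ) < Real.logb 2 d + 1 := by
      rw [← Real.natCeil_logb_natCast, Nat.cast_ofNat]
      exact Nat.ceil_lt_add_one (Real.logb_nonneg one_lt_two (by norm_cast; omega))
    have hlogb : Real.logb 2 d ≤ 2 * Real.log d := by
      rw [Real.logb, div_le_iff₀ (Real.log_pos one_lt_two)]
      nlinarith [Real.log_two_gt_d9]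
    linarith
  calc Real.log (2 * Nat.clog 2 d)
      ≤ Real.log (2 ^ 2 * (1 + Real.log d)) := Real.log_le_log (by positivity) (by linarith)
    _ = 2 * Real.log 2 + Real.log (1 + Real.log d) := by
        rw [Real.log_mul (by norm_num) (by positivity), Real.log_pow, Nat.cast_ofNat]
    _ ≤ 2 * (1 + Real.log (1 + Real.log d)) := by linarith [Real.log_two_lt_d9]

end RateTuning

section Prior

theorem sum_prod_mul_apply {ι κ R : Type*} [Fintype ι] [DecidableEq ι] [Fintype κ] [CommSemiring R]
    {φ : ι → κ → R} (hφ : ∀ a, ∑ k, φ a k = 1) (i : ι) (g : κ → R) :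
    ∑ f : ι → κ, (∏ a, φ a (f a)) * g (f i) = ∑ k, φ i k * g k := by
  have hfactor : ∀ f : ι → κ, (∏ a, φ a (f a)) * g (f i) =
      ∏ a, φ a (f a) * if a = i then g (f a) else 1 := fun f => by
    rw [prod_mul_distrib, prod_ite_eq' univ i, if_pos (mem_univ i)]
  simp only [hfactor]
  rw [← Fintype.prod_sum fun a k => φ a k * if a = i then g k else 1,
    prod_eq_single_of_mem i (mem_univ i) fun a _ ha => by simp [ha, hφ a]]
  simp only [if_true]

variable {d : ℕ}

theorem QSet_nonempty {φ : Matrix (Fin d) (Fin d) ℝ} (hφ : RowStochastic φ) :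
    (QSet d φ).Nonempty := by
  refine ⟨fun f => ∏ i, φ i (f i), fun f => prod_nonneg fun i _ => (hφ i).1 _, ?_, fun i j => ?_⟩
  · exact (Fintype.prod_sum fun i j => φ i j).symm.trans
      ((prod_congr rfl fun i _ => (hφ i).2).trans prod_const_one)
  · simpa [toMat] using
      sum_prod_mul_apply (fun a => (hφ a).2) i fun k => if k = j then (1 : ℝ) else 0

theorem piInd_toMat (ψ : Matrix (Fin d) (Fin d) ℝ) (f : Fin d → Fin d) :
    piInd ψ (toMat d f) = ∏ i, ψ i (f i) := by
  simp [piInd, toMat]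

theorem sum_piInd_toMat {ψ : Matrix (Fin d) (Fin d) ℝ} (hψ : ∀ i, ∑ j, ψ i j = 1) :
    ∑ f, piInd ψ (toMat d f) = 1 := by
  simp only [piInd_toMat]
  rw [← Fintype.prod_sum fun i j => ψ i j]
  simp only [hψ, prod_const_one]

/-- The row-stochastic matrix that follows the map `g` up to uniform noise; the components `ψ^k`
and `ψ^{d+1}` of the prior are the cases of a constant map and of the identity. -/
noncomputable def smoothedMat (d : ℕ) (g : Fin d → Fin d) : Matrix (Fin d) (Fin d) ℝ :=
  fun i j => ((d : ℝ) - 2) / ((d : ℝ) - 1) * toMat d g i j + 1 / ((d : ℝ) * ((d : ℝ) - 1))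

theorem psiK_eq_smoothedMat (k : Fin d) : psiK d k = smoothedMat d fun _ => k := by
  ext i j
  simp only [psiK, smoothedMat, toMat, eq_comm (a := j)]

theorem psiSelf_eq_smoothedMat : psiSelf d = smoothedMat d id :=
  rfl

theorem sum_smoothedMat (hd : 2 ≤ d) (g : Fin d → Fin d) (i : Fin d) :
    ∑ j, smoothedMat d g i j = 1 := by
  have hd' : (2 : ℝ) ≤ d := by exact_mod_cast hd
  have hd1 : (d : ℝ) - 1 ≠ 0 := by linarith
  simp only [smoothedMat, toMat, sum_add_distrib, mul_ite, mul_one, mul_zero, sum_ite_eq, mem_univ,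
    if_true, sum_const, card_univ, Fintype.card_fin, nsmul_eq_mul]
  field_simp
  ring

theorem smoothedMat_pos (hd : 2 ≤ d) (g : Fin d → Fin d) (i j : Fin d) :
    0 < smoothedMat d g i j := by
  have hd' : (2 : ℝ) ≤ d := by exact_mod_cast hd
  have hd1 : 0 < (d : ℝ) - 1 := by linarith
  have : 0 ≤ (d : ℝ) - 2 := by linarith
  have hentry : 0 ≤ toMat d g i j := by
    rw [toMat]
    split_ifs <;> norm_num
  rw [smoothedMat]
  positivity

theorem piInd_smoothedMat_pos (hd : 2 ≤ d) (g f : Fin d → Fin d) :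
    0 < piInd (smoothedMat d g) (toMat d f) := by
  rw [piInd_toMat]
  exact prod_pos fun i _ => smoothedMat_pos hd g i (f i)

theorem neg_log_smoothedMat_le (hd : 2 ≤ d) (g : Fin d → Fin d) (i j : Fin d) :
    -Real.log (smoothedMat d g i j) ≤ 2 / d + if j ≠ g i then 2 * Real.log d else 0 := by
  have hd' : (2 : ℝ) ≤ d := by exact_mod_cast hd
  have hd1 : 0 < (d : ℝ) - 1 := by linarith
  rw [← Real.log_inv]
  split_ifs with hj
  · have hentry : (smoothedMat d g i j)⁻¹ = d * (d - 1) := by simp [smoothedMat, toMat, hj.symm]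
    rw [hentry, Real.log_mul (by positivity) hd1.ne']
    have hlog : Real.log ((d : ℝ) - 1) ≤ Real.log d := Real.log_le_log hd1 (by linarith)
    have : 0 ≤ 2 / (d : ℝ) := by positivity
    linarith
  · have hentry : (smoothedMat d g i j)⁻¹ = d / (d - 1) := by
      have hval : smoothedMat d g i j = (d - 1) / d := by
        simp only [smoothedMat, toMat, not_not.1 hj, if_true]
        field_simp
        ring
      rw [hval, inv_div]
    rw [hentry, add_zero]
    calc Real.log ((d : ℝ) / (d - 1)) ≤ d / (d - 1) - 1 :=
          Real.log_le_sub_one_of_pos (by positivity)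
      _ ≤ 2 / d := by
          rw [div_sub_one hd1.ne', div_le_div_iff₀ hd1 (by positivity)]
          linarith

theorem neg_log_piInd_smoothedMat_le (hd : 2 ≤ d) (g f : Fin d → Fin d) :
    -Real.log (piInd (smoothedMat d g) (toMat d f)) ≤ 2 + 2 * Real.log d * hammingDist f g := by
  have hd0 : (d : ℝ) ≠ 0 := by norm_cast; omega
  rw [piInd_toMat, Real.log_prod fun i _ => (smoothedMat_pos hd g i (f i)).ne', ← sum_neg_distrib]
  calc ∑ i, -Real.log (smoothedMat d g i (f i))
      ≤ ∑ i, (2 / d + if f i ≠ g i then 2 * Real.log d else 0) :=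
        sum_le_sum fun i _ => neg_log_smoothedMat_le hd g i (f i)
    _ = 2 + 2 * Real.log d * hammingDist f g := by
        rw [sum_add_distrib, sum_const, card_univ, Fintype.card_fin, nsmul_eq_mul,
          mul_div_cancel₀ _ hd0, ← sum_filter, sum_const, nsmul_eq_mul, mul_comm (2 * Real.log d)]
        rfl

theorem priorPi_eq_smoothedMat (φ : Matrix (Fin d) (Fin d) ℝ) :
    priorPi d φ = 1 / (2 * d) * ∑ k, piInd (smoothedMat d fun _ => k) φ +
      1 / 2 * piInd (smoothedMat d id) φ := by
  simp only [priorPi, psiK_eq_smoothedMat, psiSelf_eq_smoothedMat]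

theorem sum_priorPi (hd : 2 ≤ d) : ∑ f, priorPi d (toMat d f) = 1 := by
  have hd0 : (d : ℝ) ≠ 0 := by norm_cast; omega
  have hsum (g : Fin d → Fin d) : ∑ f, piInd (smoothedMat d g) (toMat d f) = 1 :=
    sum_piInd_toMat (sum_smoothedMat hd g)
  simp only [priorPi_eq_smoothedMat, sum_add_distrib, ← mul_sum]
  rw [sum_comm]
  simp only [hsum, sum_const, card_univ, Fintype.card_fin, nsmul_eq_mul]
  field_simp
  norm_num

theorem half_mul_piInd_id_le_priorPi (hd : 2 ≤ d) (f : Fin d → Fin d) :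
    1 / 2 * piInd (smoothedMat d id) (toMat d f) ≤ priorPi d (toMat d f) := by
  rw [priorPi_eq_smoothedMat]
  have : 0 ≤ ∑ k, piInd (smoothedMat d fun _ => k) (toMat d f) :=
    sum_nonneg fun k _ => (piInd_smoothedMat_pos hd _ f).le
  exact le_add_of_nonneg_left (by positivity)

theorem inv_mul_piInd_const_le_priorPi (hd : 2 ≤ d) (f : Fin d → Fin d) (k : Fin d) :
    1 / (2 * d) * piInd (smoothedMat d fun _ => k) (toMat d f) ≤ priorPi d (toMat d f) := by
  rw [priorPi_eq_smoothedMat]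
  have hk : piInd (smoothedMat d fun _ => k) (toMat d f) ≤
      ∑ k, piInd (smoothedMat d fun _ => k) (toMat d f) :=
    single_le_sum (f := fun k => piInd (smoothedMat d fun _ => k) (toMat d f))
      (fun k _ => (piInd_smoothedMat_pos hd _ f).le) (mem_univ k)
  have hid := piInd_smoothedMat_pos hd id f
  exact (mul_le_mul_of_nonneg_left hk (by positivity)).trans
    (le_add_of_nonneg_right (by positivity))

theorem priorPi_pos (hd : 2 ≤ d) (f : Fin d → Fin d) : 0 < priorPi d (toMat d f) :=
  (mul_pos one_half_pos (piInd_smoothedMat_pos hd id f)).trans_le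
    (half_mul_piInd_id_le_priorPi hd f)

theorem neg_log_priorPi_le_of_mul_piInd_le (hd : 2 ≤ d) {f g : Fin d → Fin d} {α : ℝ} (hα : 0 < α)
    (hle : 1 / α * piInd (smoothedMat d g) (toMat d f) ≤ priorPi d (toMat d f)) :
    -Real.log (priorPi d (toMat d f)) ≤ Real.log α + 2 + 2 * Real.log d * hammingDist f g := by
  have hpos := piInd_smoothedMat_pos hd g f
  have hlog := Real.log_le_log (by positivity) hle
  rw [Real.log_mul (by positivity) hpos.ne', one_div, Real.log_inv] at hlog
  linarith [neg_log_piInd_smoothedMat_le hd g f]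

end Prior

section Complexity

variable {d : ℕ}

theorem toMat_apply_eq_iff {f g : Fin d → Fin d} {i j : Fin d} :
    toMat d f i = toMat d g j ↔ f i = g j := by
  refine ⟨fun h => ?_, fun h => by funext k; rw [toMat, toMat, h]⟩
  have hk := congrFun h (g j)
  by_contra hne
  simp [toMat, hne] at hk

theorem sub_card_eq_hammingDist (f g : Fin d → Fin d) :
    d - Nat.card {i // f i = g i} = hammingDist f g := by
  have hcard := card_filter_add_card_filter_not (s := (univ : Finset (Fin d))) fun i => f i = g i
  rw [card_univ, Fintype.card_fin] at hcard
  rw [Nat.card_eq_fintype_card, Fintype.card_subtype]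
  exact Nat.sub_eq_of_eq_add' hcard.symm

theorem sub_dSelf_toMat (f : Fin d → Fin d) : d - dSelf (toMat d f) = hammingDist f id := by
  have hrow (i : Fin d) : (fun j => if j = i then (1 : ℝ) else 0) = toMat d id i := by
    funext j
    simp only [toMat, id, eq_comm (a := j)]
  rw [← sub_card_eq_hammingDist, dSelf]
  simp only [hrow, toMat_apply_eq_iff]

theorem exists_sub_dUnif_toMat (hd : 0 < d) (f : Fin d → Fin d) :
    ∃ k, d - dUnif (toMat d f) = hammingDist f fun _ => k := by
  obtain ⟨i, -, hi⟩ := exists_mem_eq_sup (univ : Finset (Fin d)) ⟨⟨0, hd⟩, mem_univ _⟩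
    fun i => Nat.card {j // toMat d f j = toMat d f i}
  refine ⟨f i, ?_⟩
  rw [← sub_card_eq_hammingDist, dUnif, hi]
  simp only [toMat_apply_eq_iff]

theorem neg_log_priorPi_le (hd : 2 ≤ d) (f : Fin d → Fin d) :
    -Real.log (priorPi d (toMat d f)) ≤ 3 + 2 * Real.log d * cB (toMat d f) := by
  obtain ⟨k, hk⟩ := exists_sub_dUnif_toMat (by omega) f
  have hself := neg_log_priorPi_le_of_mul_piInd_le hd two_pos (half_mul_piInd_id_le_priorPi hd f)
  have hunif := neg_log_priorPi_le_of_mul_piInd_le hd (by positivity)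
    (inv_mul_piInd_const_le_priorPi hd f k)
  rw [Real.log_mul two_ne_zero (by positivity)] at hunif
  have hlog2 := Real.log_two_lt_d9
  have hlog : 0 ≤ Real.log d := Real.log_natCast_nonneg d
  rw [cB, sub_dSelf_toMat, hk]
  rcases min_choice (hammingDist f id) (hammingDist f (fun _ => k) + 1) with hmin | hmin <;>
    rw [hmin]
  · linarith
  · push_cast
    linarith

theorem klPrior_eq_relEntropy (q : (Fin d → Fin d) → ℝ) :
    klPrior d q = relEntropy univ q fun f => priorPi d (toMat d f) :=
  rfl

theorem klPrior_nonneg (hd : 2 ≤ d) {φ : Matrix (Fin d) (Fin d) ℝ} {q : (Fin d → Fin d) → ℝ}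
    (hq : q ∈ QSet d φ) : 0 ≤ klPrior d q :=
  relEntropy_nonneg (fun f _ => hq.1 f) (fun f _ => priorPi_pos hd f)
    ((sum_priorPi hd).trans hq.2.1.symm).le

theorem klPrior_le (hd : 2 ≤ d) {φ : Matrix (Fin d) (Fin d) ℝ} {q : (Fin d → Fin d) → ℝ}
    (hq : q ∈ QSet d φ) : klPrior d q ≤ 3 + 2 * Real.log d * ∑ f, q f * cB (toMat d f) := by
  obtain ⟨hq0, hq1, -⟩ := hq
  have hle1 : ∀ f, q f ≤ 1 := fun f => hq1 ▸ single_le_sum (fun g _ => hq0 g) (mem_univ f)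
  calc klPrior d q ≤ ∑ f, q f * -Real.log (priorPi d (toMat d f)) :=
        relEntropy_le_sum_mul_neg_log (fun f _ => hq0 f) (fun f _ => hle1 f)
          fun f _ => priorPi_pos hd f
    _ ≤ ∑ f, q f * (3 + 2 * Real.log d * cB (toMat d f)) :=
        sum_le_sum fun f _ => mul_le_mul_of_nonneg_left (neg_log_priorPi_le hd f) (hq0 f)
    _ = 3 + 2 * Real.log d * ∑ f, q f * cB (toMat d f) := by
        simp only [mul_add, sum_add_distrib, mul_left_comm (q _), ← mul_sum, ← sum_mul, hq1,
          one_mul]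

theorem klPrior_add_two_le (hd : 2 ≤ d) {φ : Matrix (Fin d) (Fin d) ℝ} {q : (Fin d → Fin d) → ℝ}
    (hq : q ∈ QSet d φ) : klPrior d q + 2 ≤ 4 * 2 ^ (2 * Nat.clog 2 d) := by
  have hd' : (2 : ℝ) ≤ d := by exact_mod_cast hd
  have hlog : Real.log d ≤ d - 1 := Real.log_le_sub_one_of_pos (by linarith)
  have hmean : ∑ f, q f * (cB (toMat d f) : ℝ) ≤ d := by
    calc ∑ f, q f * (cB (toMat d f) : ℝ) ≤ ∑ f, q f * d := by
          gcongr with f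
          · exact hq.1 f
          · exact (min_le_left _ _).trans (Nat.sub_le _ _)
      _ = d := by rw [← sum_mul, hq.2.1, one_mul]
  have hpow : (d : ℝ) ^ 2 ≤ 2 ^ (2 * Nat.clog 2 d) := by
    rw [mul_comm, pow_mul]
    gcongr
    exact_mod_cast Nat.le_pow_clog one_lt_two d
  have hprod : Real.log d * ∑ f, q f * (cB (toMat d f) : ℝ) ≤ (d - 1) * d :=
    mul_le_mul hlog hmean (sum_nonneg fun f _ => mul_nonneg (hq.1 f) (Nat.cast_nonneg _))
      (by linarith)
  nlinarith [klPrior_le hd hq]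

theorem cGen_mem_closure {φ : Matrix (Fin d) (Fin d) ℝ} (hφ : RowStochastic φ) :
    cGen d φ ∈ closure ((fun q => ∑ f, q f * (cB (toMat d f) : ℝ)) '' QSet d φ) := by
  refine csInf_mem_closure ((QSet_nonempty hφ).image _) ⟨0, ?_⟩
  rintro _ ⟨q, hq, rfl⟩
  exact sum_nonneg fun f _ => mul_nonneg (hq.1 f) (Nat.cast_nonneg _)

end Complexity

section PhiRegret

variable {d : ℕ}

theorem lossInner_eq_dotProduct (φ : Matrix (Fin d) (Fin d) ℝ) (p ℓ : Fin d → ℝ) :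
    lossInner φ p ℓ = p ⬝ᵥ φ.mulVec ℓ := by
  simp only [lossInner, dotProduct, Matrix.mulVec, mul_sum, mul_left_comm]

theorem lossInner_sum_smul {ι : Type*} (s : Finset ι) (c : ι → ℝ)
    (A : ι → Matrix (Fin d) (Fin d) ℝ) (p ℓ : Fin d → ℝ) :
    lossInner (∑ k ∈ s, c k • A k) p ℓ = ∑ k ∈ s, c k * lossInner (A k) p ℓ := by
  simp only [lossInner_eq_dotProduct, Matrix.sum_mulVec, Matrix.smul_mulVec, dotProduct_sum,
    dotProduct_smul, smul_eq_mul]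

theorem mixMat_eq_sum_smul (q : (Fin d → Fin d) → ℝ) : mixMat d q = ∑ f, q f • toMat d f := by
  ext i j
  simp only [mixMat, Matrix.sum_apply, Matrix.smul_apply, smul_eq_mul]

theorem lossInner_mixMat (q : (Fin d → Fin d) → ℝ) (p ℓ : Fin d → ℝ) :
    lossInner (mixMat d q) p ℓ = ∑ f, q f * lossInner (toMat d f) p ℓ := by
  rw [mixMat_eq_sum_smul, lossInner_sum_smul]

theorem lossInner_toMat_mem_Icc {p ℓ : Fin d → ℝ} (hp : InSimplex d p)
    (hℓ : ∀ i, ℓ i ∈ Set.Icc 0 1) (f : Fin d → Fin d) :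
    lossInner (toMat d f) p ℓ ∈ Set.Icc 0 1 := by
  have hvalue : lossInner (toMat d f) p ℓ = ∑ i, p i * ℓ (f i) := by simp [lossInner, toMat]
  rw [hvalue]
  exact (convex_Icc 0 1).sum_mem (fun i _ => hp.1 i) hp.2 fun i _ => hℓ (f i)

theorem sum_sub_mul_eq_lossInner_sub {Φ : Matrix (Fin d) (Fin d) ℝ} {p : Fin d → ℝ}
    (hp : ∀ i, p i = ∑ j, Φ j i * p j) (φ : Matrix (Fin d) (Fin d) ℝ) (ℓ : Fin d → ℝ) :
    ∑ i, (p i - ∑ j, φ j i * p j) * ℓ i = lossInner Φ p ℓ - lossInner φ p ℓ := by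
  have hinner (A : Matrix (Fin d) (Fin d) ℝ) :
      ∑ i, (∑ j, A j i * p j) * ℓ i = lossInner A p ℓ := by
    simp only [lossInner, sum_mul, mul_assoc]
    exact sum_comm
  simp only [sub_mul, sum_sub_distrib, hinner]
  rw [← hinner Φ]
  simp only [← hp]

/-- The `Φ`-regret `Reg(φ) = ∑ₜ ⟨p t - φᵀ p t, ℓ t⟩` over the rounds `1, …, T`. -/
noncomputable def phiRegret (T : ℕ) (ℓ p : ℕ → Fin d → ℝ) (φ : Matrix (Fin d) (Fin d) ℝ) : ℝ :=
  ∑ t ∈ Icc 1 T, ∑ i, (p t i - ∑ j, φ j i * p t j) * ℓ t i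

/-- A run of the meta algorithm on the losses `ℓ` for the rounds `1, …, T`: `qB h` are the weights
of the `h`-th base learner over the binary matrices (indexed by maps), `w` the weights of the meta
learner over the base learners, and `p` the strategies played. -/
structure MetaMWURun (T : ℕ) (ℓ p : ℕ → Fin d → ℝ) (qB : ℕ → ℕ → (Fin d → Fin d) → ℝ)
    (w : ℕ → ℕ → ℝ) : Prop where
  loss_mem : ∀ t ∈ Icc 1 T, ∀ i, ℓ t i ∈ Set.Icc 0 1
  mem_simplex : ∀ t ∈ Icc 1 T, InSimplex d (p t)
  base_init : ∀ h ∈ Icc 1 (2 * Nat.clog 2 d), ∀ f, qB h 1 f = priorPi d (toMat d f)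
  base_update : ∀ h ∈ Icc 1 (2 * Nat.clog 2 d), ∀ t ∈ Icc 1 T, ∀ f, qB h (t + 1) f =
    qB h t f * Real.exp (-√((2 : ℝ) ^ h / T) * lossInner (toMat d f) (p t) (ℓ t)) /
      ∑ g, qB h t g * Real.exp (-√((2 : ℝ) ^ h / T) * lossInner (toMat d g) (p t) (ℓ t))
  meta_init : ∀ h ∈ Icc 1 (2 * Nat.clog 2 d), w 1 h = 1 / (2 * Nat.clog 2 d : ℝ)
  meta_update : ∀ t ∈ Icc 1 T, ∀ h ∈ Icc 1 (2 * Nat.clog 2 d), w (t + 1) h =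
    w t h * Real.exp (-√(Real.log (2 * Nat.clog 2 d : ℝ) / T) *
        lossInner (mixMat d (qB h t)) (p t) (ℓ t)) /
      ∑ k ∈ Icc 1 (2 * Nat.clog 2 d), w t k *
        Real.exp (-√(Real.log (2 * Nat.clog 2 d : ℝ) / T) *
          lossInner (mixMat d (qB k t)) (p t) (ℓ t))
  stationary : ∀ t ∈ Icc 1 T, ∀ i, p t i =
    ∑ j, (∑ h ∈ Icc 1 (2 * Nat.clog 2 d), w t h * mixMat d (qB h t) j i) * p t j

namespace MetaMWURun

variable {T : ℕ} {ℓ p : ℕ → Fin d → ℝ} {qB : ℕ → ℕ → (Fin d → Fin d) → ℝ} {w : ℕ → ℕ → ℝ}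
  {φ : Matrix (Fin d) (Fin d) ℝ} {q : (Fin d → Fin d) → ℝ}

theorem isMWU_base (run : MetaMWURun T ℓ p qB w) (hd : 2 ≤ d) {h : ℕ}
    (hh : h ∈ Icc 1 (2 * Nat.clog 2 d)) :
    IsMWU univ T √((2 : ℝ) ^ h / T) (fun t f => lossInner (toMat d f) (p t) (ℓ t)) (qB h) where
  init_pos f _ := by
    rw [run.base_init h hh]
    exact priorPi_pos hd f
  init_sum := by simpa only [run.base_init h hh] using sum_priorPi hd
  update t ht f _ := run.base_update h hh t ht f

theorem isMWU_meta (run : MetaMWURun T ℓ p qB w) (hd : 2 ≤ d) :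
    IsMWU (Icc 1 (2 * Nat.clog 2 d)) T √(Real.log (2 * Nat.clog 2 d) / T)
      (fun t h => ∑ f, qB h t f * lossInner (toMat d f) (p t) (ℓ t)) w where
  init_pos h hh := by
    have := Nat.clog_pos one_lt_two hd
    rw [run.meta_init h hh]
    positivity
  init_sum := by
    have := Nat.clog_pos one_lt_two hd
    rw [sum_congr rfl run.meta_init, sum_const, Nat.card_Icc, Nat.add_sub_cancel, nsmul_eq_mul]
    push_cast
    exact mul_one_div_cancel (by positivity)
  update t ht h hh := by simpa only [lossInner_mixMat] using run.meta_update t ht h hh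

theorem phiRegret_eq (run : MetaMWURun T ℓ p qB w) (hq : q ∈ QSet d φ) :
    phiRegret T ℓ p φ = ∑ t ∈ Icc 1 T, (∑ h ∈ Icc 1 (2 * Nat.clog 2 d), w t h *
      ∑ f, qB h t f * lossInner (toMat d f) (p t) (ℓ t) -
        ∑ f, q f * lossInner (toMat d f) (p t) (ℓ t)) := by
  have hφ : mixMat d q = φ := Matrix.ext hq.2.2
  refine sum_congr rfl fun t ht => ?_
  have hstat : ∀ i, p t i =
      ∑ j, (∑ h ∈ Icc 1 (2 * Nat.clog 2 d), w t h • mixMat d (qB h t)) j i * p t j := by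
    simpa only [Matrix.sum_apply, Matrix.smul_apply, smul_eq_mul] using run.stationary t ht
  rw [sum_sub_mul_eq_lossInner_sub hstat, lossInner_sum_smul, ← hφ]
  simp only [lossInner_mixMat]

theorem phiRegret_le_klPrior (run : MetaMWURun T ℓ p qB w) (hd : 2 ≤ d) (hT : 1 ≤ T)
    (hq : q ∈ QSet d φ) :
    phiRegret T ℓ p φ ≤
      6 * (√(T * klPrior d q) + √(T * (1 + Real.log (1 + Real.log d)))) := by
  have hclog : 1 ≤ Nat.clog 2 d := Nat.clog_pos one_lt_two hd
  have hclog' : (1 : ℝ) ≤ Nat.clog 2 d := by exact_mod_cast hclog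
  have hT' : (0 : ℝ) < T := by exact_mod_cast hT
  have hlogM : 0 < Real.log (2 * Nat.clog 2 d) := Real.log_pos (by linarith)
  have hloglog : 0 ≤ Real.log (1 + Real.log d) :=
    Real.log_nonneg (le_add_of_nonneg_right (Real.log_natCast_nonneg d))
  obtain ⟨h, hh, hbase⟩ := exists_mem_Icc_div_sqrt_pow_add_le (klPrior_nonneg hd hq) hT'
    (by omega) (klPrior_add_two_le hd hq)
  have hmeta := div_sqrt_add_sqrt_mul_le (c := 1) hlogM zero_le_one hT' le_rfl (by simp)
  have hsplit := (run.isMWU_meta hd).meta_regret_le (fun k hk => run.isMWU_base hd hk)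
    (Real.sqrt_pos.2 (by positivity)) hh (Real.sqrt_pos.2 (by positivity))
    (fun t ht f _ => lossInner_toMat_mem_Icc (run.mem_simplex t ht) (run.loss_mem t ht) f)
    (fun f _ => hq.1 f) hq.2.1
  have hsqrt_le {x : ℝ} (hx : x ≤ 2 * (1 + Real.log (1 + Real.log d))) :
      √(T * x) ≤ 3 / 2 * √(T * (1 + Real.log (1 + Real.log d))) := by
    rw [Real.sqrt_le_left (by positivity), mul_pow, Real.sq_sqrt (by positivity)]
    nlinarith
  rw [← run.phiRegret_eq hq, run.meta_init h hh, one_div, Real.log_inv, neg_neg,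
    funext (run.base_init h hh), ← klPrior_eq_relEntropy] at hsplit
  linarith [hsqrt_le (log_two_mul_clog_le hd), hsqrt_le (x := 2) (by linarith),
    Real.sqrt_nonneg (T * klPrior d q)]

theorem phiRegret_le_cGen (run : MetaMWURun T ℓ p qB w) (hd : 2 ≤ d) (hT : 1 ≤ T)
    (hφ : RowStochastic φ) :
    phiRegret T ℓ p φ ≤
      12 * (√((1 + cGen d φ * Real.log d) * T) + √(T * (1 + Real.log (1 + Real.log d)))) := by
  have hclosed : IsClosed {x : ℝ | phiRegret T ℓ p φ ≤
      12 * (√((1 + x * Real.log d) * T) + √(T * (1 + Real.log (1 + Real.log d))))} :=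
    isClosed_le (by fun_prop) (by fun_prop)
  refine closure_minimal ?_ hclosed (cGen_mem_closure hφ)
  rintro _ ⟨q, hq, rfl⟩
  have hkl : √(T * klPrior d q) ≤
      2 * √((1 + (∑ f, q f * (cB (toMat d f) : ℝ)) * Real.log d) * T) := by
    have hlog : 0 ≤ Real.log d := Real.log_natCast_nonneg d
    have hmean : 0 ≤ ∑ f, q f * (cB (toMat d f) : ℝ) :=
      sum_nonneg fun f _ => mul_nonneg (hq.1 f) (Nat.cast_nonneg _)
    rw [Real.sqrt_le_left (by positivity), mul_pow, Real.sq_sqrt (by positivity), mul_comm,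
      ← mul_assoc]
    gcongr
    linarith [klPrior_le hd hq, mul_nonneg hmean hlog]
  have := Real.sqrt_nonneg (T * (1 + Real.log (1 + Real.log d)))
  exact (run.phiRegret_le_klPrior hd hT hq).trans (by linarith)

end MetaMWURun

end PhiRegret

/-- There are universal constants `C, C' > 0` such that the meta MWU algorithm
over `M = 2⌈log₂ d⌉` kernelized-MWU base learners (base learner `h` runs MWU with prior `π` and
learning rate `η_h = √(2^h/T)` over `Φ_b`; the meta learner runs MWU with learning rate
`√(log M / T)` over the base learners; the played `p_t` is a stationary distribution of the
weighted average matrix) guarantees, for all `d ≥ 2`, `T ≥ 1` and losses in `[0,1]^d`,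
`Reg(φ) ≤ C (√(T·KL(q,π)) + √(T(1 + log(1 + log d))))` for every row-stochastic `φ` and every
`q ∈ Q_φ`, and `Reg(φ) ≤ C' (√((1 + c_φ log d) T) + √(T(1 + log(1 + log d))))` for every
row-stochastic `φ`. -/
theorem stmt10 :
    ∃ C > (0 : ℝ), ∃ C' > (0 : ℝ),
      ∀ (d T : ℕ), 2 ≤ d → 1 ≤ T →
      ∀ (ℓ p : ℕ → Fin d → ℝ) (qB : ℕ → ℕ → (Fin d → Fin d) → ℝ) (w : ℕ → ℕ → ℝ),
        (∀ t ∈ Finset.Icc 1 T, ∀ i, 0 ≤ ℓ t i ∧ ℓ t i ≤ 1) →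
        (∀ t ∈ Finset.Icc 1 T, InSimplex d (p t)) →
        -- base learners: MWU over `Φ_b` with prior `π` and learning rate `η_h = √(2^h/T)`
        (∀ h ∈ Finset.Icc 1 (2 * Nat.clog 2 d), ∀ f, qB h 1 f = priorPi d (toMat d f)) →
        (∀ h ∈ Finset.Icc 1 (2 * Nat.clog 2 d), ∀ t ∈ Finset.Icc 1 T, ∀ f,
          qB h (t + 1) f =
            qB h t f *
                Real.exp (-Real.sqrt ((2 : ℝ) ^ h / (T : ℝ)) *
                  lossInner (toMat d f) (p t) (ℓ t)) /
              ∑ g, qB h t g *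
                Real.exp (-Real.sqrt ((2 : ℝ) ^ h / (T : ℝ)) *
                  lossInner (toMat d g) (p t) (ℓ t))) →
        -- meta learner: MWU over the base learners with uniform prior and rate `√(log M / T)`
        (∀ h ∈ Finset.Icc 1 (2 * Nat.clog 2 d), w 1 h = 1 / (2 * Nat.clog 2 d : ℝ)) →
        (∀ t ∈ Finset.Icc 1 T, ∀ h ∈ Finset.Icc 1 (2 * Nat.clog 2 d),
          w (t + 1) h =
            w t h *
                Real.exp (-Real.sqrt (Real.log (2 * Nat.clog 2 d : ℝ) / (T : ℝ)) *
                  lossInner (mixMat d (qB h t)) (p t) (ℓ t)) /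
              ∑ h' ∈ Finset.Icc 1 (2 * Nat.clog 2 d), w t h' *
                Real.exp (-Real.sqrt (Real.log (2 * Nat.clog 2 d : ℝ) / (T : ℝ)) *
                  lossInner (mixMat d (qB h' t)) (p t) (ℓ t))) →
        -- `p_t` is a stationary distribution of `φ_t = Σ_h w_{t,h} φ_t^h`
        (∀ t ∈ Finset.Icc 1 T, ∀ i,
          p t i = ∑ j, (∑ h ∈ Finset.Icc 1 (2 * Nat.clog 2 d),
            w t h * mixMat d (qB h t) j i) * p t j) →
        (∀ φ : Matrix (Fin d) (Fin d) ℝ, RowStochastic φ → ∀ q ∈ QSet d φ,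
          (∑ t ∈ Finset.Icc 1 T, ∑ i, (p t i - ∑ j, φ j i * p t j) * ℓ t i) ≤
            C * (Real.sqrt ((T : ℝ) * klPrior d q) +
              Real.sqrt ((T : ℝ) * (1 + Real.log (1 + Real.log d))))) ∧
        (∀ φ : Matrix (Fin d) (Fin d) ℝ, RowStochastic φ →
          (∑ t ∈ Finset.Icc 1 T, ∑ i, (p t i - ∑ j, φ j i * p t j) * ℓ t i) ≤
            C' * (Real.sqrt ((1 + cGen d φ * Real.log d) * (T : ℝ)) +
              Real.sqrt ((T : ℝ) * (1 + Real.log (1 + Real.log d))))) := by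
  refine ⟨6, by norm_num, 12, by norm_num, fun d T hd hT ℓ p qB w hℓ hp hq1 hq hw1 hw hstat => ?_⟩
  have run : MetaMWURun T ℓ p qB w := ⟨hℓ, hp, hq1, hq, hw1, hw, hstat⟩
  exact ⟨fun φ _ q hq => run.phiRegret_le_klPrior hd hT hq,
    fun φ hφ => run.phiRegret_le_cGen hd hT hφ⟩
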